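/- arXiv:1406.4619 — 2 statements merged into one kernel-verified Lean document; each statement's English description precedes it below -/
import Mathlib

section
/- Assume h is continuous and strictly positive on ℝⁿ. For δ ≥ 0 and Borel A ⊆ ℝ define the transition kernel P(δ, A) = ∫_{ℝⁿ} 1_A(δ − g(x)) · f*_δ(x) dx. Then for every δ ≥ 0 and every Borel set A ⊆ [0, ∞) of strictly positive Lebesgue measure one has P(δ, A) > 0. -/
/-!
On the set `S = {x | δ - g x ∈ A}` the integrand is strictly positive. Since `A ⊆ [0, ∞)`, the set
`S` lies in `L_δ`, and `{y | y₁ < x₁} ∩ L_δ` always contains a nonempty open set, so its `μ`-measure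
is positive because `μ` has a positive density. The set `S` has positive Lebesgue measure because
`g` is a nonzero linear functional, so that the image of Lebesgue measure under `g` is a positive
multiple of Lebesgue measure on `ℝ` (`volume_preimage_pos`). The integrand is measurable, since
`x₁ ↦ μ ({y | y₁ < x₁} ∩ L_δ)` is monotone; hence its integral is positive.
-/

open MeasureTheory Real Set

/-- The constraint function `g(x) = x₁ cos θ + x₂ sin θ` on `ℝⁿ` with `n = m + 2 ≥ 2`. -/
noncomputable def constraintG (m : ℕ) (θ : ℝ) (x : Fin (m + 2) → ℝ) : ℝ :=
  x 0 * Real.cos θ + x 1 * Real.sin θ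

/-- `L_δ = {x ∈ ℝⁿ : g(x) ≤ δ}`. -/
noncomputable def Lset (m : ℕ) (θ δ : ℝ) : Set (Fin (m + 2) → ℝ) :=
  {x | constraintG m θ x ≤ δ}

/-- The density of the selected step:
`f*_δ(x) = λ h(x) 1_{L_δ}(x) μ(((−∞,x₁)×ℝ^{n−1}) ∩ L_δ)^{λ−1} / μ(L_δ)^λ`. -/
noncomputable def selectedDensity (m : ℕ) (θ : ℝ) (h : (Fin (m + 2) → ℝ) → ℝ)
    (μ : Measure (Fin (m + 2) → ℝ)) (lam : ℕ) (δ : ℝ) (x : Fin (m + 2) → ℝ) : ℝ :=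
  (Lset m θ δ).indicator
    (fun x =>
      (lam : ℝ) * h x * ((μ ({y | y 0 < x 0} ∩ Lset m θ δ)).toReal) ^ (lam - 1)
        / ((μ (Lset m θ δ)).toReal) ^ lam) x

lemma continuous_constraintG (m : ℕ) (θ : ℝ) : Continuous (constraintG m θ) := by
  unfold constraintG
  fun_prop

/-- The functional `g` attains every value on each hyperplane `x₁ = a`. -/
lemma exists_constraintG_eq (m : ℕ) {θ : ℝ} (hs : sin θ ≠ 0) (a b : ℝ) :
    ∃ y : Fin (m + 2) → ℝ, y 0 = a ∧ constraintG m θ y = b := by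
  refine ⟨fun i => if i = 0 then a else (b - a * cos θ) / sin θ, by simp, ?_⟩
  have h10 : (1 : Fin (m + 2)) ≠ 0 := by simp
  simp only [constraintG, if_true, h10, if_false]
  field_simp
  ring

lemma volume_preimage_pos (m : ℕ) {θ : ℝ} (hs : sin θ ≠ 0) (δ : ℝ) {A : Set ℝ}
    (hA : MeasurableSet A) (hA0 : 0 < volume A) :
    0 < volume {x : Fin (m + 2) → ℝ | δ - constraintG m θ x ∈ A} := by
  let L : (Fin (m + 2) → ℝ) →ₗ[ℝ] ℝ :=
    { toFun := constraintG m θ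
      map_add' := fun x y => by simp [constraintG]; ring
      map_smul' := fun c x => by simp [constraintG]; ring }
  have hL : Function.Surjective L := fun b =>
    (exists_constraintG_eq m hs 0 b).imp fun _ hy => hy.2
  obtain ⟨c, hc, hmap⟩ := L.exists_map_addHaar_eq_smul_addHaar volume volume hL
  have hB : MeasurableSet ((fun t : ℝ => δ - t) ⁻¹' A) := hA.preimage (by fun_prop)
  have hvol : volume ((fun t : ℝ => δ - t) ⁻¹' A) = volume A :=
    (Measure.measurePreserving_sub_left volume δ).measure_preimage hA.nullMeasurableSet
  have hLm : Measurable L := (continuous_constraintG m θ).measurable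
  have key := congrArg (fun ν => ν ((fun t : ℝ => δ - t) ⁻¹' A)) hmap
  simp only [Measure.map_apply hLm hB, Measure.smul_apply, hvol, smul_eq_mul] at key
  change 0 < volume (L ⁻¹' ((fun t : ℝ => δ - t) ⁻¹' A))
  rw [key]
  exact ENNReal.mul_pos hc.ne' hA0.ne'

lemma measure_halfspace_inter_Lset_pos (m : ℕ) {θ : ℝ} (hs : sin θ ≠ 0)
    {μ : Measure (Fin (m + 2) → ℝ)} (hac : volume ≪ μ) (a δ : ℝ) :
    0 < μ ({y | y 0 < a} ∩ Lset m θ δ) := by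
  have hopen : IsOpen ({y : Fin (m + 2) → ℝ | y 0 < a} ∩ {y | constraintG m θ y < δ}) :=
    (isOpen_lt (by fun_prop) continuous_const).inter
      (isOpen_lt (continuous_constraintG m θ) continuous_const)
  obtain ⟨y, hy0, hy⟩ := exists_constraintG_eq m hs (a - 1) (δ - 1)
  have hne : ({y : Fin (m + 2) → ℝ | y 0 < a} ∩ {y | constraintG m θ y < δ}).Nonempty :=
    ⟨y, by simp [hy0], by simp [hy]⟩
  refine lt_of_lt_of_le (pos_iff_ne_zero.2 fun h0 => (hopen.measure_pos volume hne).ne' (hac h0))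
    (measure_mono (inter_subset_inter_right _ fun y (hy : constraintG m θ y < δ) => hy.le))

lemma measurable_selectedDensity (m : ℕ) (θ : ℝ) {h : (Fin (m + 2) → ℝ) → ℝ}
    (hcont : Continuous h) (μ : Measure (Fin (m + 2) → ℝ)) [IsProbabilityMeasure μ]
    (lam : ℕ) (δ : ℝ) : Measurable (selectedDensity m θ h μ lam δ) := by
  have hmono : Monotone fun a : ℝ =>
      (μ ({y : Fin (m + 2) → ℝ | y 0 < a} ∩ Lset m θ δ)).toReal := fun a b hab =>
    ENNReal.toReal_mono (measure_ne_top _ _)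
      (measure_mono (inter_subset_inter_left _ fun y (hy : y 0 < a) => hy.trans_le hab))
  have hF : Measurable fun x : Fin (m + 2) → ℝ =>
      (μ ({y : Fin (m + 2) → ℝ | y 0 < x 0} ∩ Lset m θ δ)).toReal :=
    hmono.measurable.comp (measurable_pi_apply 0)
  have hLs : MeasurableSet (Lset m θ δ) :=
    measurableSet_le (continuous_constraintG m θ).measurable measurable_const
  exact (((hcont.measurable.const_mul _).mul (hF.pow_const _)).div_const _).indicator hLs

/-- if the step density `h` is continuous and strictly positive, then the
transition kernel `P(δ, A) = ∫ 1_A(δ − g(x)) f*_δ(x) dx` of the normalized-distance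
chain charges every Borel `A ⊆ [0,∞)` of positive Lebesgue measure. -/
theorem transition_kernel_positive
    {m lam : ℕ} (hlam : 2 ≤ lam) (θ : ℝ) (hθ : θ ∈ Set.Ioo 0 (π / 2))
    (h : (Fin (m + 2) → ℝ) → ℝ) (hcont : Continuous h) (hpos : ∀ x, 0 < h x)
    (μ : Measure (Fin (m + 2) → ℝ)) [IsProbabilityMeasure μ]
    (hμ : μ = volume.withDensity fun x => ENNReal.ofReal (h x)) :
    ∀ δ : ℝ, 0 ≤ δ → ∀ A : Set ℝ, MeasurableSet A → A ⊆ Set.Ici 0 →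
      0 < volume A →
      0 < ∫⁻ x, A.indicator (1 : ℝ → ENNReal) (δ - constraintG m θ x) *
            ENNReal.ofReal (selectedDensity m θ h μ lam δ x) ∂volume := by
  intro δ _ A hA hA0 hApos
  have hs : sin θ ≠ 0 := (sin_pos_of_pos_of_lt_pi hθ.1 (by linarith [hθ.2, pi_pos])).ne'
  have hac : volume ≪ μ := by
    rw [hμ]
    exact withDensity_absolutelyContinuous' hcont.measurable.ennreal_ofReal.aemeasurable
      (ae_of_all _ fun x => by simpa using hpos x)
  have hgm := (continuous_constraintG m θ).measurable
  have hmeas : Measurable fun x => A.indicator (1 : ℝ → ENNReal) (δ - constraintG m θ x) *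
      ENNReal.ofReal (selectedDensity m θ h μ lam δ x) :=
    ((measurable_one.indicator hA).comp (hgm.const_sub δ)).mul
      (measurable_selectedDensity m θ hcont μ lam δ).ennreal_ofReal
  rw [lintegral_pos_iff_support hmeas]
  refine (volume_preimage_pos m hs δ hA hApos).trans_le (measure_mono fun x hx => ?_)
  have hxA : δ - constraintG m θ x ∈ A := hx
  have hxL : x ∈ Lset m θ δ :=
    show constraintG m θ x ≤ δ from sub_nonneg.1 (hA0 hxA)
  have hnum : 0 < (μ ({y | y 0 < x 0} ∩ Lset m θ δ)).toReal :=
    ENNReal.toReal_pos (measure_halfspace_inter_Lset_pos m hs hac (x 0) δ).ne' (measure_ne_top _ _)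
  have hden : 0 < (μ (Lset m θ δ)).toReal :=
    hnum.trans_le (ENNReal.toReal_mono (measure_ne_top _ _) (measure_mono inter_subset_right))
  have hlam0 : (0 : ℝ) < lam := by exact_mod_cast (by omega : 0 < lam)
  have hsel : 0 < selectedDensity m θ h μ lam δ x := by
    rw [selectedDensity, indicator_of_mem hxL]
    have := hpos x
    positivity
  simp [Function.mem_support, hxA, hsel]
end

section
/- Assume h is continuous, strictly positive, and satisfies the reflection symmetry h(u₁, y, u₃, …, uₙ) = h(u₁, −y, u₃, …, uₙ) for all (u₁, y, u₃, …, uₙ) ∈ ℝⁿ, and that ∫ |x₂| h(x) dx < ∞. Then for every δ ≥ 0, ∫_{ℝⁿ} x₂ · f*_δ(x) dx < 0. -/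
/-!
The reflection `R` of the second coordinate preserves Lebesgue measure, so with `F x = x₂ f*_δ(x)`
one has `2 ∫ F = ∫ (F + F ∘ R)`. Since `h` and the selection weight
`μ({y₁ < x₁} ∩ L_δ)^(λ-1)` are invariant under `R`, the symmetrised integrand equals
`x₂ · (nonnegative) · (1_L(x) - 1_L(R x))`. As `sin θ > 0`, the constraint is tighter for positive
`x₂` than for its reflection, hence this is pointwise nonpositive (`symmetrised_nonpos`). It is
strictly negative on the nonempty open set where `x₂ > 0`, `g(x) > δ`, `g(R x) < δ`
(`symmetrised_neg`), which gives the strict inequality.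
-/

open MeasureTheory Real Set

/-- The reflection `x₂ ↦ -x₂` of `ℝⁿ`. -/
def reflectSecond (m : ℕ) (x : Fin (m + 2) → ℝ) : Fin (m + 2) → ℝ :=
  Function.update x 1 (-(x 1))

lemma reflectSecond_zero (m : ℕ) (x : Fin (m + 2) → ℝ) : reflectSecond m x 0 = x 0 := by
  simp [reflectSecond]

lemma reflectSecond_one (m : ℕ) (x : Fin (m + 2) → ℝ) : reflectSecond m x 1 = -(x 1) := by
  simp [reflectSecond]

lemma reflectSecond_involutive (m : ℕ) : Function.Involutive (reflectSecond m) := by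
  intro x
  simp [reflectSecond]

lemma measurePreserving_reflectSecond (m : ℕ) :
    MeasurePreserving (reflectSecond m) volume volume := by
  have key := volume_preserving_pi (ι := Fin (m + 2)) (α' := fun _ => ℝ) (β' := fun _ => ℝ)
    (f := fun i => if i = 1 then (fun t : ℝ => -t) else id) (by
      intro i
      by_cases hi : i = 1
      · simpa [hi] using Measure.measurePreserving_neg (volume : Measure ℝ)
      · simpa [hi] using MeasurePreserving.id (volume : Measure ℝ))
  refine (congrArg (fun f => MeasurePreserving f volume volume) ?_).mpr key
  funext x i
  by_cases hi : i = 1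
  · subst hi
    simp [reflectSecond]
  · simp [reflectSecond, hi]

lemma measurableEmbedding_reflectSecond (m : ℕ) : MeasurableEmbedding (reflectSecond m) :=
  (MeasurableEquiv.mk (reflectSecond_involutive m).toPerm
    (measurePreserving_reflectSecond m).measurable
    (measurePreserving_reflectSecond m).measurable).measurableEmbedding

lemma measurableSet_Lset (m : ℕ) (θ δ : ℝ) : MeasurableSet (Lset m θ δ) :=
  (isClosed_le (continuous_constraintG m θ) continuous_const).measurableSet

/-- The unnormalised selection weight is positive: the half-space `{y₁ < a}` meets `L_δ` in a set
with nonempty interior, on which the positive density charges every open set. -/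
lemma selectionWeight_pos {m : ℕ} {θ : ℝ} (hθ : θ ∈ Set.Ioo 0 (π / 2))
    {h : (Fin (m + 2) → ℝ) → ℝ} (hcont : Continuous h) (hpos : ∀ x, 0 < h x)
    (μ : Measure (Fin (m + 2) → ℝ)) [IsProbabilityMeasure μ]
    (hμ : μ = volume.withDensity fun x => ENNReal.ofReal (h x)) (δ a : ℝ) :
    0 < (μ ({y | y 0 < a} ∩ Lset m θ δ)).toReal := by
  have hs : 0 < Real.sin θ := Real.sin_pos_of_pos_of_lt_pi hθ.1 (by linarith [hθ.2, Real.pi_pos])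
  refine ENNReal.toReal_pos ?_ (measure_ne_top _ _)
  have hac : (volume : Measure (Fin (m + 2) → ℝ)) ≪ μ := by
    rw [hμ]
    refine withDensity_absolutelyContinuous' (by fun_prop) ?_
    filter_upwards with x
    simpa using hpos x
  have hopen : IsOpen ({y : Fin (m + 2) → ℝ | y 0 < a} ∩ {y | constraintG m θ y < δ}) :=
    (isOpen_lt (continuous_apply 0) continuous_const).inter
      (isOpen_lt (continuous_constraintG m θ) continuous_const)
  have hne : ({y : Fin (m + 2) → ℝ | y 0 < a} ∩ {y | constraintG m θ y < δ}).Nonempty := by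
    refine ⟨fun i => if i = 0 then a - 1 else (δ - 1 - (a - 1) * Real.cos θ) / Real.sin θ, ?_, ?_⟩
    · simp
    · simp only [mem_ofPred_eq, constraintG]
      rw [if_pos trivial, if_neg (by simp), div_mul_cancel₀ _ hs.ne']
      linarith
  intro h0
  refine (hopen.measure_pos volume hne).ne' (measure_mono_null ?_ (hac h0))
  exact fun y hy => ⟨hy.1, le_of_lt (show constraintG m θ y < δ from hy.2)⟩

/-- The density `f*_δ` without the indicator of `L_δ`; it is invariant under reflection. -/
noncomputable def freeDensity (m : ℕ) (θ : ℝ) (h : (Fin (m + 2) → ℝ) → ℝ)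
    (μ : Measure (Fin (m + 2) → ℝ)) (lam : ℕ) (δ : ℝ) (x : Fin (m + 2) → ℝ) : ℝ :=
  (lam : ℝ) * h x * ((μ ({y | y 0 < x 0} ∩ Lset m θ δ)).toReal) ^ (lam - 1)
    / ((μ (Lset m θ δ)).toReal) ^ lam

lemma freeDensity_reflect {m : ℕ} (θ : ℝ) {h : (Fin (m + 2) → ℝ) → ℝ}
    (hsym : ∀ x : Fin (m + 2) → ℝ, h (Function.update x 1 (-(x 1))) = h x)
    (μ : Measure (Fin (m + 2) → ℝ)) (lam : ℕ) (δ : ℝ) (x : Fin (m + 2) → ℝ) :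
    freeDensity m θ h μ lam δ (reflectSecond m x) = freeDensity m θ h μ lam δ x := by
  unfold freeDensity
  rw [reflectSecond_zero, show h (reflectSecond m x) = h x from hsym x]

lemma selectedDensity_eq (m : ℕ) (θ : ℝ) (h : (Fin (m + 2) → ℝ) → ℝ)
    (μ : Measure (Fin (m + 2) → ℝ)) (lam : ℕ) (δ : ℝ) :
    selectedDensity m θ h μ lam δ = (Lset m θ δ).indicator (freeDensity m θ h μ lam δ) := rfl

lemma freeDensity_pos {m lam : ℕ} (hlam : 2 ≤ lam) {θ : ℝ} (hθ : θ ∈ Set.Ioo 0 (π / 2))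
    {h : (Fin (m + 2) → ℝ) → ℝ} (hcont : Continuous h) (hpos : ∀ x, 0 < h x)
    (μ : Measure (Fin (m + 2) → ℝ)) [IsProbabilityMeasure μ]
    (hμ : μ = volume.withDensity fun x => ENNReal.ofReal (h x)) (δ : ℝ)
    (x : Fin (m + 2) → ℝ) : 0 < freeDensity m θ h μ lam δ x := by
  have hw := selectionWeight_pos hθ hcont hpos μ hμ δ (x 0)
  have hL : 0 < (μ (Lset m θ δ)).toReal :=
    hw.trans_le (ENNReal.toReal_mono (measure_ne_top _ _) (measure_mono inter_subset_right))
  have hx := hpos x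
  have hl : (0 : ℝ) < lam := by exact_mod_cast (by omega : 0 < lam)
  unfold freeDensity
  positivity

/-- The selection weight is at most one, so `|x₂| h` dominates `x₂ f*_δ` up to a constant; the
weight is measurable because it is monotone in `x₁`. -/
lemma integrable_selected {m : ℕ} (lam : ℕ) (θ : ℝ) {h : (Fin (m + 2) → ℝ) → ℝ}
    (hcont : Continuous h) (hpos : ∀ x, 0 < h x)
    (hint : Integrable (fun x : Fin (m + 2) → ℝ => |x 1| * h x) volume)
    (μ : Measure (Fin (m + 2) → ℝ)) [IsProbabilityMeasure μ] (δ : ℝ) :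
    Integrable (fun x => x 1 * selectedDensity m θ h μ lam δ x) volume := by
  have hmono : Monotone fun a : ℝ =>
      (μ ({y : Fin (m + 2) → ℝ | y 0 < a} ∩ Lset m θ δ)).toReal := by
    intro a b hab
    refine ENNReal.toReal_mono (measure_ne_top _ _) (measure_mono ?_)
    exact fun y hy => ⟨lt_of_lt_of_le (show y 0 < a from hy.1) hab, hy.2⟩
  have hw : Measurable fun x : Fin (m + 2) → ℝ =>
      (μ ({y : Fin (m + 2) → ℝ | y 0 < x 0} ∩ Lset m θ δ)).toReal :=
    hmono.measurable.comp (measurable_pi_apply 0)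
  have hfree : Measurable (freeDensity m θ h μ lam δ) := by
    unfold freeDensity
    exact ((measurable_const.mul hcont.measurable).mul (hw.pow_const _)).div_const _
  refine (hint.const_mul ((lam : ℝ) / ((μ (Lset m θ δ)).toReal) ^ lam)).mono' ?_ ?_
  · rw [selectedDensity_eq]
    exact ((measurable_pi_apply 1).mul
      (hfree.indicator (measurableSet_Lset m θ δ))).aestronglyMeasurable
  · filter_upwards with x
    have hx := hpos x
    rw [selectedDensity_eq, norm_mul, Real.norm_eq_abs]
    have hb : ‖(Lset m θ δ).indicator (freeDensity m θ h μ lam δ) x‖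
        ≤ (lam : ℝ) / ((μ (Lset m θ δ)).toReal) ^ lam * h x := by
      refine (norm_indicator_le_norm_self _ _).trans ?_
      have hnn : 0 ≤ freeDensity m θ h μ lam δ x := by
        unfold freeDensity
        positivity
      rw [Real.norm_of_nonneg hnn]
      have h1 : ((μ ({y | y 0 < x 0} ∩ Lset m θ δ)).toReal) ^ (lam - 1) ≤ 1 :=
        pow_le_one₀ ENNReal.toReal_nonneg measureReal_le_one
      calc freeDensity m θ h μ lam δ x
          = (lam : ℝ) / ((μ (Lset m θ δ)).toReal) ^ lam * h x
            * ((μ ({y | y 0 < x 0} ∩ Lset m θ δ)).toReal) ^ (lam - 1) := by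
              unfold freeDensity
              ring
        _ ≤ (lam : ℝ) / ((μ (Lset m θ δ)).toReal) ^ lam * h x * 1 := by gcongr
        _ = _ := mul_one _
    calc _ ≤ |x 1| * ((lam : ℝ) / ((μ (Lset m θ δ)).toReal) ^ lam * h x) := by gcongr
      _ = _ := by ring

/-- `φ` stands for the reflection-invariant factor of the integrand. -/
lemma symmetrised_nonpos {m : ℕ} {θ : ℝ} (hs : 0 < Real.sin θ) (δ : ℝ)
    {φ : (Fin (m + 2) → ℝ) → ℝ} (hφ : ∀ x, 0 < φ x)
    (hR : ∀ x, φ (reflectSecond m x) = φ x) (x : Fin (m + 2) → ℝ) :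
    x 1 * (Lset m θ δ).indicator φ x
      + reflectSecond m x 1 * (Lset m θ δ).indicator φ (reflectSecond m x) ≤ 0 := by
  have hx := hφ x
  simp only [indicator_apply, Lset, mem_ofPred_eq, constraintG, reflectSecond_one,
    reflectSecond_zero, hR]
  split_ifs with h1 h2 h2
  · linarith
  · have : x 1 ≤ 0 := by
      by_contra! hc
      nlinarith [mul_pos hc hs]
    nlinarith
  · have : 0 ≤ x 1 := by
      by_contra! hc
      nlinarith [mul_pos (neg_pos.2 hc) hs]
    nlinarith
  · simp

lemma symmetrised_neg {m : ℕ} {θ : ℝ} (δ : ℝ)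
    {φ : (Fin (m + 2) → ℝ) → ℝ} (hφ : ∀ x, 0 < φ x)
    (hR : ∀ x, φ (reflectSecond m x) = φ x) (x : Fin (m + 2) → ℝ) (hx1 : 0 < x 1)
    (hx : δ < constraintG m θ x) (hx' : x 0 * Real.cos θ - x 1 * Real.sin θ < δ) :
    x 1 * (Lset m θ δ).indicator φ x
      + reflectSecond m x 1 * (Lset m θ δ).indicator φ (reflectSecond m x) < 0 := by
  have h1 : x ∉ Lset m θ δ := not_le.2 hx
  have h2 : reflectSecond m x ∈ Lset m θ δ := by
    simp only [Lset, mem_ofPred_eq, constraintG, reflectSecond_one, reflectSecond_zero]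
    linarith
  rw [indicator_of_notMem h1, indicator_of_mem h2, hR, reflectSecond_one]
  nlinarith [mul_pos hx1 (hφ x)]

/-- if the step density `h` is continuous, strictly positive, symmetric
under reflection of the second coordinate, and has integrable second marginal moment,
then the mean second coordinate of the selected step is strictly negative:
`∫ x₂ f*_δ(x) dx < 0` for every `δ ≥ 0`. -/
theorem selected_second_coordinate_negative
    {m lam : ℕ} (hlam : 2 ≤ lam) (θ : ℝ) (hθ : θ ∈ Set.Ioo 0 (π / 2))
    (h : (Fin (m + 2) → ℝ) → ℝ) (hcont : Continuous h) (hpos : ∀ x, 0 < h x)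
    (hsym : ∀ x : Fin (m + 2) → ℝ, h (Function.update x 1 (-(x 1))) = h x)
    (hint : Integrable (fun x : Fin (m + 2) → ℝ => |x 1| * h x) volume)
    (μ : Measure (Fin (m + 2) → ℝ)) [IsProbabilityMeasure μ]
    (hμ : μ = volume.withDensity fun x => ENNReal.ofReal (h x)) :
    ∀ δ : ℝ, 0 ≤ δ → (∫ x, x 1 * selectedDensity m θ h μ lam δ x) < 0 := by
  intro δ _
  have hs : 0 < Real.sin θ := Real.sin_pos_of_pos_of_lt_pi hθ.1 (by linarith [hθ.2, Real.pi_pos])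
  have hc : 0 < Real.cos θ := Real.cos_pos_of_mem_Ioo ⟨by linarith [hθ.1, Real.pi_pos], hθ.2⟩
  have hφ := freeDensity_pos hlam hθ hcont hpos μ hμ δ
  have hR := freeDensity_reflect θ hsym μ lam δ
  have hF := integrable_selected lam θ hcont hpos hint μ δ
  rw [selectedDensity_eq] at hF ⊢
  set φ := freeDensity m θ h μ lam δ
  set F : (Fin (m + 2) → ℝ) → ℝ := fun x => x 1 * (Lset m θ δ).indicator φ x with hFdef
  have hmp := measurePreserving_reflectSecond m
  have hFR : Integrable (fun x => F (reflectSecond m x)) volume :=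
    hmp.integrable_comp_of_integrable hF
  have heq : ∫ x, F (reflectSecond m x) = ∫ x, F x :=
    hmp.integral_comp (measurableEmbedding_reflectSecond m) F
  have hsum : ∫ x, -(F x + F (reflectSecond m x)) = -(2 * ∫ x, F x) := by
    rw [integral_neg, integral_add hF hFR, heq, two_mul]
  have hpos' : 0 < ∫ x, -(F x + F (reflectSecond m x)) := by
    rw [integral_pos_iff_support_of_nonneg
      (fun x => neg_nonneg.2 (symmetrised_nonpos hs δ hφ hR x)) (hF.add hFR).neg]
    have hopen : IsOpen {x : Fin (m + 2) → ℝ | 0 < x 1 ∧ δ < constraintG m θ x ∧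
        x 0 * Real.cos θ - x 1 * Real.sin θ < δ} :=
      (isOpen_lt continuous_const (continuous_apply 1)).inter
        ((isOpen_lt continuous_const (continuous_constraintG m θ)).inter
          (isOpen_lt (((continuous_apply 0).mul continuous_const).sub
            ((continuous_apply 1).mul continuous_const)) continuous_const))
    refine (hopen.measure_pos volume ?_).trans_le (measure_mono ?_)
    -- The point with `x₁ cos θ = δ` and `x₂ = 1`.
    · refine ⟨fun i => if i = 0 then δ / Real.cos θ else 1, ?_⟩
      simp only [mem_ofPred_eq, constraintG]
      rw [if_pos trivial, if_neg (by simp), div_mul_cancel₀ _ hc.ne']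
      refine ⟨one_pos, ?_, ?_⟩ <;> linarith
    · rintro x ⟨h1, h2, h3⟩
      exact (neg_pos.2 (symmetrised_neg δ hφ hR x h1 h2 h3)).ne'
  linarith
end
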